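/- The ring R is almost coherent if and only if every R-module M admits an almost flat preenvelope, i.e., an R-linear map f : M → F with F almost flat such that for every almost flat R-module F' and every R-linear map g : M → F' there exists an R-linear map h : F → F' with g = h ∘ f. -/

import Mathlib

universe u

open CategoryTheory

/-- A module `F` is almost flat if `Tor₁ᴿ(N, F)` is almost zero for every module `N`. -/
def IsAlmostFlat {R : Type u} [CommRing R] (m : Ideal R)
    (F : Type u) [AddCommGroup F] [Module R F] : Prop :=
  ∀ (N : Type u) [AddCommGroup N] [Module R N],
    ∀ s ∈ m, ∀ x : ((Tor (ModuleCat.{u} R) 1).obj (ModuleCat.of R N)).obj (ModuleCat.of R F),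
      s • x = 0

/-- A module `M` is almost finitely generated (relative to the ideal `m`). -/
def IsAlmostFG {R : Type u} [CommRing R] (m : Ideal R)
    (M : Type u) [AddCommGroup M] [Module R M] : Prop :=
  ∀ s ∈ m, ∃ (n : ℕ) (f : (Fin n → R) →ₗ[R] M), ∀ y : M, s • y ∈ LinearMap.range f

/-- A module `M` is almost finitely presented (relative to the ideal `m`). -/
def IsAlmostFP {R : Type u} [CommRing R] (m : Ideal R)
    (M : Type u) [AddCommGroup M] [Module R M] : Prop :=
  ∀ s ∈ m, ∀ t ∈ m, ∃ (n k : ℕ) (g : (Fin k → R) →ₗ[R] (Fin n → R))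
    (f : (Fin n → R) →ₗ[R] M),
      f ∘ₗ g = 0 ∧ (∀ y : M, s • y ∈ LinearMap.range f) ∧
        (∀ x ∈ LinearMap.ker f, t • x ∈ LinearMap.range g)

/-- `R` is almost coherent: every almost finitely generated ideal is
almost finitely presented. -/
def IsAlmostCoherent {R : Type u} [CommRing R] (m : Ideal R) : Prop :=
  ∀ I : Ideal R, IsAlmostFG m I → IsAlmostFP m I

/-!
Computing `Tor₁(N, F)` from a presentation `0 → K → P → F → 0` with `P` projective turns almost
flatness of `F` into an equational criterion: for `s ∈ m`, every relation `∑ vᵢ xᵢ = 0` in `F`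
becomes trivial after multiplication by `s`. Finitely many relations are then trivialized one after
the other, because `m = m²` lets us spend one factor from `m` on each of them.

For a vector `v ∈ Rⁿ` the functionals killing `v` are the syzygies of the ideal generated by its
coordinates, so almost coherence says that up to `s ∈ m` they all factor through one map
`Rⁿ → Rᵏ` killing `v`. Applied in all factors at once, this shows that a product of almost flat
modules is almost flat; conversely, almost flatness of the power of `R` indexed by these
functionals gives back such a map, and powers of `R` are retracts of their preenvelopes.

When products preserve almost flatness, the product of a solution set is a preenvelope. To find a
solution set, close the image of `M → F` under elements witnessing the equational criterion: the
result is an almost flat submodule of `F` whose size is bounded in terms of `R` and `M`.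
-/

open TensorProduct Module

section Tor

variable {R : Type u} [CommRing R]

theorem smul_homology_eq_zero_iff (S : ShortComplex (ModuleCat.{u} R)) (s : R) :
    (∀ x : S.homology, s • x = 0) ↔
      ∀ x ∈ LinearMap.ker S.g.hom, s • x ∈ LinearMap.range S.f.hom := by
  let e : S.homology ≃ₗ[R] LinearMap.ker S.g.hom ⧸ LinearMap.range S.moduleCatToCycles :=
    S.moduleCatHomologyIso.toLinearEquiv
  rw [e.symm.surjective.forall, (Submodule.Quotient.mk_surjective _).forall, Subtype.forall]
  refine forall₂_congr fun x hx => ?_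
  rw [← map_smul, LinearEquiv.map_eq_zero_iff, ← Submodule.Quotient.mk_smul,
    Submodule.Quotient.mk_eq_zero]
  exact exists_congr fun y => Subtype.ext_iff

variable {F : Type u} [AddCommGroup F] [Module R F]

/-- The augmentation `P₀ → F` of a projective resolution of a module `F`, as a linear map. -/
noncomputable def augmentation (P : ProjectiveResolution (ModuleCat.of R F)) :
    P.complex.X 0 →ₗ[R] F :=
  (P.π.f 0).hom

theorem augmentation_surjective (P : ProjectiveResolution (ModuleCat.of R F)) :
    Function.Surjective (augmentation P) :=
  (ModuleCat.epi_iff_surjective (P.π.f 0)).mp inferInstance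

instance projective_complex_X_zero (P : ProjectiveResolution (ModuleCat.of R F)) :
    Module.Projective R (P.complex.X 0) :=
  (IsProjective.iff_projective _).mpr (P.projective 0)

theorem smul_tor_one_eq_zero_iff_exact (P : ProjectiveResolution (ModuleCat.of R F))
    (N : Type u) [AddCommGroup N] [Module R N] (s : R) :
    (∀ x : ((Tor (ModuleCat.{u} R) 1).obj (ModuleCat.of R N)).obj (ModuleCat.of R F),
        s • x = 0) ↔
      ∀ x ∈ LinearMap.ker ((P.complex.d 1 0).hom.lTensor N),
        s • x ∈ LinearMap.range ((P.complex.d 2 1).hom.lTensor N) := by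
  let T := (MonoidalCategory.tensoringLeft (ModuleCat.{u} R)).obj (ModuleCat.of R N)
  let K := (T.mapHomologicalComplex _).obj P.complex
  have torIso : ((Tor (ModuleCat.{u} R) 1).obj (ModuleCat.of R N)).obj (ModuleCat.of R F) ≅
      (K.sc' 2 1 0).homology :=
    P.isoLeftDerivedObj T 1 ≪≫ K.homologyIsoSc' 2 1 0 (by simp) (by simp)
  rw [torIso.toLinearEquiv.symm.surjective.forall]
  simp_rw [← map_smul, LinearEquiv.map_eq_zero_iff]
  exact smul_homology_eq_zero_iff (K.sc' 2 1 0) s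

theorem smul_tor_one_eq_zero_iff (P : ProjectiveResolution (ModuleCat.of R F))
    (N : Type u) [AddCommGroup N] [Module R N] (s : R) :
    (∀ x : ((Tor (ModuleCat.{u} R) 1).obj (ModuleCat.of R N)).obj (ModuleCat.of R F),
        s • x = 0) ↔
      ∀ z ∈ LinearMap.ker ((LinearMap.ker (augmentation P)).subtype.lTensor N), s • z = 0 := by
  have exact₁ : Function.Exact (P.complex.d 2 1).hom (P.complex.d 1 0).hom :=
    (ShortComplex.ShortExact.moduleCat_exact_iff_function_exact _).mp (P.exact_succ 0)
  have exact₀ : Function.Exact (P.complex.d 1 0).hom (augmentation P) :=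
    (ShortComplex.ShortExact.moduleCat_exact_iff_function_exact _).mp P.exact₀
  let d := (P.complex.d 1 0).hom.codRestrict (LinearMap.ker (augmentation P))
    exact₀.apply_apply_eq_zero
  have d_surjective : Function.Surjective d := fun z =>
    ((exact₀ z).mp z.2).imp fun _ => Subtype.ext
  have d_exact : Function.Exact (P.complex.d 2 1).hom d := fun x =>
    Subtype.ext_iff.trans (exact₁ x)
  have lTensor_d : (P.complex.d 1 0).hom.lTensor N =
      (LinearMap.ker (augmentation P)).subtype.lTensor N ∘ₗ d.lTensor N := by
    rw [← LinearMap.lTensor_comp]; rfl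
  rw [smul_tor_one_eq_zero_iff_exact P, lTensor_d,
    (LinearMap.lTensor_surjective N d_surjective).forall]
  refine forall₂_congr fun x _ => ?_
  rw [← map_smul]
  exact (lTensor_exact N d_exact d_surjective _).symm

end Tor

section FactorsThroughFree

variable {R : Type*} [CommRing R] {N F G : Type*} [AddCommGroup N] [Module R N]
  [AddCommGroup F] [Module R F] [AddCommGroup G] [Module R G]

/-- The linear map `x : N → F` factors through a finite free module `Rᵏ` in such a way that the
submodule `V` of `N` is already killed by the map `N → Rᵏ`. For `N = Rⁿ` and `V` spanned by a
vector `v`, this says that `∑ vᵢ x(eᵢ) = 0` is a trivial relation in `F`. -/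
def FactorsThroughFree (V : Submodule R N) (x : N →ₗ[R] F) : Prop :=
  ∃ (k : ℕ) (a : N →ₗ[R] (Fin k → R)) (y : (Fin k → R) →ₗ[R] F),
    y ∘ₗ a = x ∧ V ≤ LinearMap.ker a

namespace FactorsThroughFree

theorem of_free [Module.Free R G] [Module.Finite R G] {V : Submodule R N} {a : N →ₗ[R] G}
    (ha : V ≤ LinearMap.ker a) (y : G →ₗ[R] F) : FactorsThroughFree V (y ∘ₗ a) := by
  let e := ((Module.Free.chooseBasis R G).reindex (Fintype.equivFin _)).equivFun
  refine ⟨_, e.toLinearMap ∘ₗ a, y ∘ₗ e.symm.toLinearMap, ?_, ?_⟩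
  · ext; simp
  · rwa [LinearEquiv.ker_comp]

theorem add {V : Submodule R N} {x x' : N →ₗ[R] F} (hx : FactorsThroughFree V x)
    (hx' : FactorsThroughFree V x') : FactorsThroughFree V (x + x') := by
  obtain ⟨k, a, y, rfl, ha⟩ := hx
  obtain ⟨l, b, z, rfl, hb⟩ := hx'
  rw [← LinearMap.coprod_comp_prod]
  exact of_free (by rw [LinearMap.ker_prod]; exact le_inf ha hb) _

theorem postcomp {V : Submodule R N} {x : N →ₗ[R] F} (hx : FactorsThroughFree V x)
    (h : F →ₗ[R] G) : FactorsThroughFree V (h ∘ₗ x) := by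
  obtain ⟨k, a, y, rfl, ha⟩ := hx
  exact ⟨k, a, h ∘ₗ y, rfl, ha⟩

theorem of_flat [Module.Flat R F] [Module.Free R N] [Module.Finite R N] {x : N →ₗ[R] F} {v : N}
    (hx : x v = 0) : FactorsThroughFree (R ∙ v) x := by
  obtain ⟨k, a, y, rfl, ha⟩ := Module.Flat.exists_factorization_of_apply_eq_zero_of_free hx
  exact of_free ((Submodule.span_singleton_le_iff_mem _ _).mpr ha) y

end FactorsThroughFree

end FactorsThroughFree

section FlatPresentation

variable {R : Type*} [CommRing R] {F P : Type*} [AddCommGroup F] [Module R F] [AddCommGroup P]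
  [Module R P]

theorem exists_apply_eq_of_mem_span_range_smul_top {n : ℕ} {v : Fin n → R} {p : P}
    (hp : p ∈ Ideal.span (Set.range v) • (⊤ : Submodule R P)) :
    ∃ g : (Fin n → R) →ₗ[R] P, g v = p := by
  induction hp using Submodule.smul_induction_on' with
  | smul r hr p _ =>
    obtain ⟨c, rfl⟩ := Ideal.mem_span_range_iff_exists_fun.mp hr
    exact ⟨(Fintype.linearCombination R c).smulRight p, by
      simp [Fintype.linearCombination_apply, mul_comm]⟩
  | add p _ q _ hp hq =>
    obtain ⟨g, rfl⟩ := hp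
    obtain ⟨h, rfl⟩ := hq
    exact ⟨g + h, rfl⟩

theorem one_tmul_eq_zero_iff_mem_smul_top {J : Ideal R} {p : P} :
    (1 : R ⧸ J) ⊗ₜ[R] p = 0 ↔ p ∈ J • (⊤ : Submodule R P) := by
  rw [← (quotTensorEquivQuotSMul P J).map_eq_zero_iff, ← Submodule.Quotient.mk_eq_zero,
    ← quotTensorEquivQuotSMul_mk_one_tmul J p]

variable {e : P →ₗ[R] F} {s : R}

theorem factorsThroughFree_span_singleton_of_ker_lTensor [Module.Flat R P]
    (he : Function.Surjective e) {n : ℕ} {v : Fin n → R} {x : (Fin n → R) →ₗ[R] F} (hx : x v = 0)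
    (hs : ∀ z ∈ LinearMap.ker
      ((LinearMap.ker e).subtype.lTensor (R ⧸ Ideal.span (Set.range v))), s • z = 0) :
    FactorsThroughFree (R ∙ v) (s • x) := by
  obtain ⟨p, rfl⟩ := Module.projective_lifting_property e x he
  -- The class of `p v` dies in `R/J ⊗ P`, so `s` kills it in `R/J ⊗ ker e`; this allows us to
  -- correct `s • p` by a map into `ker e` so that it vanishes at `v`.
  let q : LinearMap.ker e := ⟨p v, hx⟩
  have tmul_q_mem : (1 : R ⧸ Ideal.span (Set.range v)) ⊗ₜ[R] q ∈
      LinearMap.ker ((LinearMap.ker e).subtype.lTensor (R ⧸ Ideal.span (Set.range v))) := by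
    rw [LinearMap.mem_ker, LinearMap.lTensor_tmul, one_tmul_eq_zero_iff_mem_smul_top]
    change p v ∈ _
    rw [p.pi_apply_eq_sum_univ]
    exact sum_mem fun i _ => Submodule.smul_mem_smul (Ideal.subset_span ⟨i, rfl⟩) trivial
  have tmul_smul_q : (1 : R ⧸ Ideal.span (Set.range v)) ⊗ₜ[R] (s • q) = 0 := by
    rw [tmul_smul, hs _ tmul_q_mem]
  obtain ⟨g, hg⟩ := exists_apply_eq_of_mem_span_range_smul_top
    (one_tmul_eq_zero_iff_mem_smul_top.mp tmul_smul_q)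
  have hv : (s • p - (LinearMap.ker e).subtype ∘ₗ g) v = 0 := by simp [hg, q]
  have hes : s • e ∘ₗ p = e ∘ₗ (s • p - (LinearMap.ker e).subtype ∘ₗ g) := by ext; simp
  exact hes ▸ (FactorsThroughFree.of_flat hv).postcomp e

theorem vanishesTrivially_smul_of_vanishesTrivially_coe (he : Function.Surjective e)
    (hs : ∀ (n : ℕ) (x : (Fin n → R) →ₗ[R] F) (V : Submodule R (Fin n → R)), V.FG →
      V ≤ LinearMap.ker x → FactorsThroughFree V (s • x))
    {N ι : Type*} [AddCommGroup N] [Module R N] [Fintype ι] {z : ι → N} {p : ι → LinearMap.ker e}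
    (hp : VanishesTrivially R z fun i => (p i : P)) : VanishesTrivially R z (s • p) := by
  obtain ⟨k, b, q, hpq, hbz⟩ := hp
  let x : (Fin k → R) →ₗ[R] F := e ∘ₗ Fintype.linearCombination R q
  have hx : Submodule.span R (Set.range b) ≤ LinearMap.ker x := by
    rw [Submodule.span_le]
    rintro _ ⟨i, rfl⟩
    change e (∑ j, b i j • q j) = 0
    exact hpq i ▸ (p i).2
  obtain ⟨l, a, y, hya, hba⟩ := hs k x _ (Submodule.fg_span (Set.finite_range b)) hx
  obtain ⟨y, rfl⟩ := Module.projective_lifting_property e y he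
  let r : (Fin k → R) →ₗ[R] LinearMap.ker e :=
    (s • Fintype.linearCombination R q - y ∘ₗ a).codRestrict _ fun c => by
      have hyac : e (y (a c)) = s • e (Fintype.linearCombination R q c) :=
        LinearMap.congr_fun hya c
      simp [hyac]
  have hr (i : ι) : s • p i = r (b i) := by
    have habi : a (b i) = 0 := hba (Submodule.subset_span ⟨i, rfl⟩)
    ext
    simp [r, habi, hpq i, Fintype.linearCombination_apply]
  obtain ⟨q', hq'⟩ := (piEquiv (Fin k) R (LinearMap.ker e)).surjective r
  exact ⟨k, b, q', fun i => by rw [Pi.smul_apply, hr, ← hq', piEquiv_apply_apply], hbz⟩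

theorem smul_eq_zero_of_mem_ker_lTensor [Module.Flat R P] (he : Function.Surjective e)
    (hs : ∀ (n : ℕ) (x : (Fin n → R) →ₗ[R] F) (V : Submodule R (Fin n → R)), V.FG →
      V ≤ LinearMap.ker x → FactorsThroughFree V (s • x))
    {N : Type*} [AddCommGroup N] [Module R N] {z : N ⊗[R] LinearMap.ker e}
    (hz : z ∈ LinearMap.ker ((LinearMap.ker e).subtype.lTensor N)) : s • z = 0 := by
  obtain ⟨S, rfl⟩ := TensorProduct.exists_finset z
  rw [← Finset.sum_coe_sort] at hz ⊢
  simp only [LinearMap.mem_ker, map_sum, LinearMap.lTensor_tmul, Submodule.subtype_apply] at hz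
  have hP := vanishesTrivially_of_sum_tmul_eq_zero_of_rTensor_injective R
    (Module.Flat.rTensor_preserves_injective_linearMap _ (Submodule.injective_subtype _)) hz
  simp only [Finset.smul_sum, ← tmul_smul]
  exact sum_tmul_eq_zero_of_vanishesTrivially R
    (vanishesTrivially_smul_of_vanishesTrivially_coe he hs hP)

end FlatPresentation

section EquationalCriterion

variable {R : Type u} [CommRing R] {m : Ideal R}

/-- Almost flatness phrased by the equational criterion: up to multiplication by any `s ∈ m`,
every linear relation in `F`, given by `x : Rⁿ → F` and `v ∈ Rⁿ` with `x v = 0`, is trivial. -/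
def IsEquationallyAlmostFlat (m : Ideal R) (F : Type*) [AddCommGroup F] [Module R F] : Prop :=
  ∀ ⦃n : ℕ⦄ ⦃v : Fin n → R⦄ ⦃x : (Fin n → R) →ₗ[R] F⦄, x v = 0 →
    ∀ s ∈ m, FactorsThroughFree (R ∙ v) (s • x)

namespace IsEquationallyAlmostFlat

variable {F G : Type*} [AddCommGroup F] [Module R F] [AddCommGroup G] [Module R G]

theorem of_flat [Module.Flat R F] : IsEquationallyAlmostFlat m F := fun _ _ _ hx s _ =>
  .of_flat (by rw [LinearMap.smul_apply, hx, smul_zero])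

theorem of_leftInverse (hF : IsEquationallyAlmostFlat m F) {f : G →ₗ[R] F} {g : F →ₗ[R] G}
    (hgf : Function.LeftInverse g f) : IsEquationallyAlmostFlat m G := fun n v x hx s hs => by
  have hsx : s • x = g ∘ₗ (s • f ∘ₗ x) := by ext; simp [hgf _]
  rw [hsx]
  exact (hF (by simp [hx]) s hs).postcomp g

/- Images `V.map f` are what the induction needs: after `V` has been killed by a map `a`, the image
of `W` under `a` remains to be dealt with. -/
theorem factorsThroughFree_map_of_fg (hm : m * m = m) (hF : IsEquationallyAlmostFlat m F)
    {K : Type*} [AddCommGroup K] [Module R K] {V : Submodule R K} (hV : V.FG) {n : ℕ}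
    {f : K →ₗ[R] (Fin n → R)} {x : (Fin n → R) →ₗ[R] F} (hx : V.map f ≤ LinearMap.ker x)
    {s : R} (hs : s ∈ m) : FactorsThroughFree (V.map f) (s • x) := by
  induction V, hV using Submodule.fg_induction generalizing n s with
  | singleton v =>
    rw [Submodule.map_span, Set.image_singleton] at hx ⊢
    exact hF ((Submodule.span_singleton_le_iff_mem _ _).mp hx) s hs
  | sup V W _ _ ihV ihW =>
    rw [Submodule.map_sup] at hx ⊢
    rw [← hm] at hs
    induction hs using Submodule.mul_induction_on' with
    | mem_mul_mem s hs t ht =>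
      obtain ⟨k, a, y, hya, hVa⟩ := ihV (le_sup_left.trans hx) ht
      have hy : W.map (a ∘ₗ f) ≤ LinearMap.ker y := by
        rw [Submodule.map_comp, Submodule.map_le_iff_le_comap, ← LinearMap.ker_comp, hya]
        exact (le_sup_right.trans hx).trans (LinearMap.ker_le_ker_smul _ _)
      obtain ⟨l, b, z, hzb, hWb⟩ := ihW hy hs
      refine ⟨l, b ∘ₗ a, z, ?_, sup_le (hVa.trans (LinearMap.ker_le_ker_comp a b)) ?_⟩
      · rw [← LinearMap.comp_assoc, hzb, LinearMap.smul_comp, hya, smul_smul]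
      · rwa [LinearMap.ker_comp, ← Submodule.map_le_iff_le_comap, ← Submodule.map_comp]
    | add s _ t _ hs ht =>
      rw [add_smul]
      exact hs.add ht

theorem isAlmostFlat (hm : m * m = m) {F : Type u} [AddCommGroup F] [Module R F]
    (hF : IsEquationallyAlmostFlat m F) : IsAlmostFlat m F := by
  intro N _ _ s hs
  let P := ProjectiveResolution.of (ModuleCat.of R F)
  rw [smul_tor_one_eq_zero_iff P]
  refine fun z => smul_eq_zero_of_mem_ker_lTensor (augmentation_surjective P) fun n x V hV hx => ?_
  simpa using hF.factorsThroughFree_map_of_fg hm hV (f := LinearMap.id) (by simpa using hx) hs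

end IsEquationallyAlmostFlat

theorem IsAlmostFlat.isEquationallyAlmostFlat {F : Type u} [AddCommGroup F] [Module R F]
    (hF : IsAlmostFlat m F) : IsEquationallyAlmostFlat m F := by
  intro n v x hx s hs
  let P := ProjectiveResolution.of (ModuleCat.of R F)
  exact factorsThroughFree_span_singleton_of_ker_lTensor (augmentation_surjective P) hx
    ((smul_tor_one_eq_zero_iff P _ s).mp (hF _ s hs))

end EquationalCriterion

section AlmostCoherent

variable {R : Type u} [CommRing R] {m : Ideal R}

theorem isAlmostFG_iff_exists_fg {M : Type u} [AddCommGroup M] [Module R M] :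
    IsAlmostFG m M ↔ ∀ s ∈ m, ∃ N : Submodule R M, N.FG ∧ ∀ y, s • y ∈ N := by
  refine forall₂_congr fun s _ => ⟨?_, ?_⟩
  · rintro ⟨n, f, hf⟩
    exact ⟨LinearMap.range f, .of_finite, hf⟩
  · rintro ⟨N, hN, hsN⟩
    obtain ⟨n, g, rfl⟩ := Submodule.fg_iff_exists_fin_generating_family.mp hN
    refine ⟨n, Fintype.linearCombination R g, fun y => ?_⟩
    rw [Fintype.range_linearCombination]
    exact hsN y

theorem IsAlmostFG.of_finite {M : Type u} [AddCommGroup M] [Module R M] [Module.Finite R M] :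
    IsAlmostFG m M :=
  isAlmostFG_iff_exists_fg.mpr fun _ _ => ⟨⊤, Module.Finite.fg_top, fun _ => trivial⟩

theorem IsAlmostFP.isAlmostFG_ker (hm : m * m = m) {M N : Type u} [AddCommGroup M] [Module R M]
    [AddCommGroup N] [Module R N] [Module.Finite R N] [Module.Projective R N]
    (hM : IsAlmostFP m M) {α : N →ₗ[R] M} (hα : Function.Surjective α) :
    IsAlmostFG m (LinearMap.ker α) := by
  rw [isAlmostFG_iff_exists_fg]
  intro u hu
  rw [← hm] at hu
  induction hu using Submodule.mul_induction_on' with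
  | mem_mul_mem t ht s hs =>
    obtain ⟨n, k, g, f, hfg, hsf, htg⟩ := hM s hs t ht
    obtain ⟨φ, hφ⟩ := Module.projective_lifting_property α f hα
    obtain ⟨ψ, hψ⟩ := Module.projective_lifting_property f.rangeRestrict
      ((s • α).codRestrict _ fun x => hsf (α x)) f.surjective_rangeRestrict
    replace hφ (x) : α (φ x) = f x := LinearMap.congr_fun hφ x
    replace hψ (x) : f (ψ x) = s • α x := congrArg Subtype.val (LinearMap.congr_fun hψ x)
    let ρ : (Fin k → R) →ₗ[R] LinearMap.ker α := (φ ∘ₗ g).codRestrict _ fun c =>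
      (hφ (g c)).trans (LinearMap.congr_fun hfg c)
    let δ : N →ₗ[R] LinearMap.ker α := (φ ∘ₗ ψ - s • LinearMap.id).codRestrict _ fun x => by
      simp [hφ, hψ]
    refine ⟨LinearMap.range ρ ⊔ LinearMap.range δ,
      Submodule.FG.of_finite.sup .of_finite, fun x => ?_⟩
    obtain ⟨c, hc⟩ := htg (ψ x) (by rw [LinearMap.mem_ker, hψ, x.2, smul_zero])
    have hx : (t * s) • x = ρ c + δ (-t • (x : N)) := by
      ext
      change (t * s) • (x : N) = φ (g c) + (φ (ψ (-t • (x : N))) - s • -t • (x : N))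
      rw [hc, map_smul, map_smul, map_smul]
      module
    rw [hx]
    exact Submodule.add_mem_sup ⟨c, rfl⟩ ⟨_, rfl⟩
  | add s _ t _ ihs iht =>
    obtain ⟨A, hA, hsA⟩ := ihs
    obtain ⟨B, hB, htB⟩ := iht
    refine ⟨A ⊔ B, hA.sup hB, fun y => ?_⟩
    rw [add_smul]
    exact Submodule.add_mem_sup (hsA y) (htB y)

/-- Every map `R → Rⁿ`, given by a vector `v ∈ Rⁿ`, has an almost weak cokernel among the finite
free modules: for each `s ∈ m` some `d : Rⁿ → Rᵏ` kills `v`, and `s • c` factors through `d` for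
every functional `c` killing `v`. -/
def HasAlmostWeakCokernels (m : Ideal R) : Prop :=
  ∀ ⦃n : ℕ⦄ (v : Fin n → R), ∀ s ∈ m, ∃ (k : ℕ) (d : (Fin n → R) →ₗ[R] (Fin k → R)),
    d v = 0 ∧ ∀ c : (Fin n → R) →ₗ[R] R, c v = 0 →
      ∃ b : (Fin k → R) →ₗ[R] R, b ∘ₗ d = s • c

theorem IsAlmostCoherent.hasAlmostWeakCokernels (hm : m * m = m) (h : IsAlmostCoherent m) :
    HasAlmostWeakCokernels m := by
  intro n v s hs
  let α := Module.Dual.eval R (Fin n → R) v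
  have hα : IsAlmostFG m (LinearMap.ker α.rangeRestrict) :=
    (h (LinearMap.range α) .of_finite).isAlmostFG_ker hm α.surjective_rangeRestrict
  obtain ⟨k, f, hf⟩ := hα s hs
  have hker (c : LinearMap.ker α.rangeRestrict) : (c : Module.Dual R (Fin n → R)) v = 0 :=
    congrArg Subtype.val c.2
  obtain ⟨d, rfl⟩ := (piEquiv (Fin k) R _).surjective f
  refine ⟨k, LinearMap.pi fun j => (d j).1, funext fun j => hker (d j), fun c hc => ?_⟩
  obtain ⟨b, hb⟩ := hf ⟨c, Subtype.ext hc⟩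
  refine ⟨Fintype.linearCombination R b, ?_⟩
  have hsc : ∑ j, b j • (d j).1 = s • c := by
    simpa [piEquiv_apply_apply] using congrArg Subtype.val hb
  rw [← hsc]
  ext u
  simp [Fintype.linearCombination_apply, mul_comm]

namespace HasAlmostWeakCokernels

theorem isAlmostCoherent (h : HasAlmostWeakCokernels m) : IsAlmostCoherent m := by
  intro I hI s hs t ht
  obtain ⟨n, f, hf⟩ := hI s hs
  obtain ⟨v, rfl⟩ := (piEquiv (Fin n) R I).surjective f
  have apply_eq_dotProduct (c : Fin n → R) :
      (piEquiv (Fin n) R I v c : R) = c ⬝ᵥ fun i => (v i).1 := by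
    simp [piEquiv_apply_apply, dotProduct]
  obtain ⟨k, d, hdv, hd⟩ := h (fun i => (v i).1) t ht
  refine ⟨n, k, (LinearMap.toMatrix' d).vecMulLinear, _, ?_, hf, fun c hc => ?_⟩
  · refine LinearMap.ext fun b => Subtype.ext ?_
    simp [apply_eq_dotProduct, ← Matrix.dotProduct_mulVec, hdv]
  · have hcv : (c ⬝ᵥ fun i => (v i).1) = 0 := by
      rw [← apply_eq_dotProduct, LinearMap.mem_ker.mp hc, Submodule.coe_zero]
    obtain ⟨b, hb⟩ := hd (dotProductBilin R R c) hcv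
    obtain ⟨b, rfl⟩ := (piEquiv (Fin k) R R).surjective b
    refine ⟨b, funext fun i => ?_⟩
    calc Matrix.vecMul b (LinearMap.toMatrix' d) i
      _ = piEquiv (Fin k) R R b (d (Pi.single i 1)) := by
        simp [Matrix.vecMul, dotProduct, mul_comm, LinearMap.toMatrix'_apply, piEquiv_apply_apply]
      _ = t • (c ⬝ᵥ Pi.single i 1) := LinearMap.congr_fun hb (Pi.single i 1)
      _ = t • c i := by rw [dotProduct_single_one]

theorem of_isEquationallyAlmostFlat_pi (h : ∀ X : Type u, IsEquationallyAlmostFlat m (X → R)) :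
    HasAlmostWeakCokernels m := by
  intro n v s hs
  let ann := {c : (Fin n → R) →ₗ[R] R // c v = 0}
  let evals : (Fin n → R) →ₗ[R] (ann → R) := LinearMap.pi Subtype.val
  obtain ⟨k, d, y, hyd, hdv⟩ := h ann (x := evals) (funext fun c => c.2) s hs
  refine ⟨k, d, (Submodule.span_singleton_le_iff_mem _ _).mp hdv, fun c hc => ?_⟩
  refine ⟨LinearMap.proj ⟨c, hc⟩ ∘ₗ y, ?_⟩
  rw [LinearMap.comp_assoc, hyd]
  rfl

theorem isEquationallyAlmostFlat_pi (hm : m * m = m) (h : HasAlmostWeakCokernels m) {ι : Type*}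
    {F : ι → Type*} [∀ i, AddCommGroup (F i)] [∀ i, Module R (F i)]
    (hF : ∀ i, IsEquationallyAlmostFlat m (F i)) : IsEquationallyAlmostFlat m (∀ i, F i) := by
  intro n v x hx s hs
  rw [← hm] at hs
  induction hs using Submodule.mul_induction_on' with
  | mem_mul_mem s hs t ht =>
    obtain ⟨k, d, hdv, hd⟩ := h v t ht
    choose l a y hya hva using fun i => hF i (x := LinearMap.proj i ∘ₗ x) (congrFun hx i) s hs
    have hav (i) (j) : (LinearMap.proj j ∘ₗ a i) v = 0 :=
      congrFun ((Submodule.span_singleton_le_iff_mem _ _).mp (hva i)) j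
    choose b hb using fun i j => hd _ (hav i j)
    refine ⟨k, d, LinearMap.pi fun i => y i ∘ₗ LinearMap.pi (b i), ?_,
      (Submodule.span_singleton_le_iff_mem _ _).mpr hdv⟩
    have hba (i) : LinearMap.pi (b i) ∘ₗ d = t • a i :=
      LinearMap.ext fun c => funext fun j => LinearMap.congr_fun (hb i j) c
    refine LinearMap.ext fun c => funext fun i => ?_
    calc y i ((LinearMap.pi (b i) ∘ₗ d) c)
      _ = t • (y i ∘ₗ a i) c := by rw [hba, LinearMap.smul_apply, map_smul, LinearMap.comp_apply]
      _ = (s * t) • x c i := by rw [hya, mul_comm, mul_smul]; rfl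
  | add s _ t _ hs ht =>
    rw [add_smul]
    exact hs.add ht

end HasAlmostWeakCokernels

end AlmostCoherent

section SolutionSet

variable {R : Type u} [CommRing R] {m : Ideal R}

/-- Families of operations on `F`: to scalars `v ∈ Rⁿ` and `s ∈ R` and elements `x ∈ Fⁿ` is
assigned a sequence in `F`. -/
abbrev WitnessFamily (R F : Type*) := ∀ n : ℕ, (Fin n → R) → R → (Fin n → F) → ℕ → F

/-- For `s ∈ m` and a relation `∑ vᵢ xᵢ = 0` in `F`, the sequence `w n v s x` starts with
elements that exhibit the triviality of the relation `∑ vᵢ (s xᵢ) = 0`. The rest of the sequence is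
arbitrary, which spares `w` from recording the number of these elements. -/
def IsTrivializing (m : Ideal R) {F : Type*} [AddCommGroup F] [Module R F]
    (w : WitnessFamily R F) : Prop :=
  ∀ ⦃n : ℕ⦄ ⦃v : Fin n → R⦄ ⦃x : Fin n → F⦄, piEquiv (Fin n) R F x v = 0 → ∀ s ∈ m,
    ∃ (k : ℕ) (a : (Fin n → R) →ₗ[R] (Fin k → R)),
      piEquiv (Fin k) R F (fun j => w n v s x j) ∘ₗ a = s • piEquiv (Fin n) R F x ∧ a v = 0

theorem IsEquationallyAlmostFlat.exists_isTrivializing {F : Type*} [AddCommGroup F] [Module R F]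
    (hF : IsEquationallyAlmostFlat m F) :
    ∃ w : WitnessFamily R F, IsTrivializing m w := by
  have exists_sequence (n : ℕ) (v : Fin n → R) (s : R) (x : Fin n → F) : ∃ w : ℕ → F,
      piEquiv (Fin n) R F x v = 0 → s ∈ m → ∃ (k : ℕ) (a : (Fin n → R) →ₗ[R] (Fin k → R)),
        piEquiv (Fin k) R F (fun j => w j) ∘ₗ a = s • piEquiv (Fin n) R F x ∧ a v = 0 := by
    by_cases h : piEquiv (Fin n) R F x v = 0 ∧ s ∈ m
    · obtain ⟨k, a, y, hya, hva⟩ := hF h.1 s h.2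
      obtain ⟨y, rfl⟩ := (piEquiv (Fin k) R F).surjective y
      refine ⟨fun j => if hj : j < k then y ⟨j, hj⟩ else 0, fun _ _ => ⟨k, a, ?_, ?_⟩⟩
      · simpa using hya
      · exact (Submodule.span_singleton_le_iff_mem _ _).mp hva
    · exact ⟨0, fun hx hs => absurd ⟨hx, hs⟩ h⟩
  choose w hw using exists_sequence
  exact ⟨w, fun n v x hx s hs => hw n v s x hx hs⟩

theorem IsTrivializing.isEquationallyAlmostFlat_submodule {F : Type*} [AddCommGroup F]
    [Module R F] {w : WitnessFamily R F} (hw : IsTrivializing m w) {S : Submodule R F}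
    (hS : ∀ n v s (x : Fin n → F) j, (∀ i, x i ∈ S) → w n v s x j ∈ S) :
    IsEquationallyAlmostFlat m S := by
  intro n v x hx s hs
  obtain ⟨x, rfl⟩ := (piEquiv (Fin n) R S).surjective x
  have subtype_piEquiv {l : ℕ} (z : Fin l → S) (c : Fin l → R) :
      (piEquiv (Fin l) R S z c : F) = piEquiv (Fin l) R F (fun i => (z i : F)) c := by
    simp [piEquiv_apply_apply]
  obtain ⟨k, a, hwa, hav⟩ := hw (by rw [← subtype_piEquiv, hx]; rfl) s hs
  let y (j : Fin k) : S := ⟨w n v s (fun i => x i) j, hS n v s _ j fun i => (x i).2⟩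
  refine ⟨k, a, piEquiv (Fin k) R S y, LinearMap.ext fun c => Subtype.ext ?_,
    (Submodule.span_singleton_le_iff_mem _ _).mpr hav⟩
  calc ((piEquiv (Fin k) R S y ∘ₗ a) c : F)
    _ = s • piEquiv (Fin n) R F (fun i => (x i : F)) c :=
      (subtype_piEquiv y (a c)).trans (LinearMap.congr_fun hwa c)
    _ = ((s • piEquiv (Fin n) R S x) c : S) := by rw [← subtype_piEquiv]; rfl

/-- Formal expressions built from elements of `M` by the module operations and by the operations
of a trivializing family. As they do not mention `F`, they bound uniformly in `F` the size of the
submodule of `F` that the image of a map `M → F` generates under these operations. -/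
inductive WitnessTerm (R M : Type*)
  | of (x : M)
  | add (t t' : WitnessTerm R M)
  | smul (r : R) (t : WitnessTerm R M)
  | witness (n : ℕ) (v : Fin n → R) (s : R) (t : Fin n → WitnessTerm R M) (j : ℕ)

namespace WitnessTerm

variable {M F : Type*} [AddCommGroup M] [Module R M] [AddCommGroup F] [Module R F]

/-- The value in `F` of a formal expression, given a map `g : M → F` and an interpretation `w` of
the symbol `witness`. -/
def eval (g : M →ₗ[R] F) (w : WitnessFamily R F) : WitnessTerm R M → F
  | of x => g x
  | add t t' => eval g w t + eval g w t'
  | smul r t => r • eval g w t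
  | witness n v s t j => w n v s (fun i => eval g w (t i)) j

/-- The values of all formal expressions, which form a submodule of `F`. -/
def evalRange (g : M →ₗ[R] F) (w : WitnessFamily R F) : Submodule R F where
  carrier := Set.range (eval g w)
  zero_mem' := ⟨of 0, map_zero g⟩
  add_mem' := by
    rintro _ _ ⟨t, rfl⟩ ⟨t', rfl⟩
    exact ⟨add t t', rfl⟩
  smul_mem' := by
    rintro r _ ⟨t, rfl⟩
    exact ⟨smul r t, rfl⟩

theorem isEquationallyAlmostFlat_evalRange (g : M →ₗ[R] F) {w : WitnessFamily R F}
    (hw : IsTrivializing m w) : IsEquationallyAlmostFlat m (evalRange g w) := by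
  refine hw.isEquationallyAlmostFlat_submodule fun n v s x j hx => ?_
  choose t ht using hx
  exact ⟨witness n v s t j, by rw [eval, funext ht]⟩

end WitnessTerm

theorem IsEquationallyAlmostFlat.exists_factorization_quotient {M F : Type*} [AddCommGroup M]
    [Module R M] [AddCommGroup F] [Module R F] (hF : IsEquationallyAlmostFlat m F)
    (g : M →ₗ[R] F) :
    ∃ (Q : Submodule R (WitnessTerm R M →₀ R)) (f : M →ₗ[R] (WitnessTerm R M →₀ R) ⧸ Q)
      (h : ((WitnessTerm R M →₀ R) ⧸ Q) →ₗ[R] F),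
      IsEquationallyAlmostFlat m ((WitnessTerm R M →₀ R) ⧸ Q) ∧ g = h ∘ₗ f := by
  obtain ⟨w, hw⟩ := hF.exists_isTrivializing
  let S := WitnessTerm.evalRange g w
  let φ : (WitnessTerm R M →₀ R) →ₗ[R] S :=
    Finsupp.linearCombination R (Set.rangeFactorization (WitnessTerm.eval g w))
  have φ_surjective : Function.Surjective φ :=
    Finsupp.linearCombination_surjective R Set.rangeFactorization_surjective
  let e := φ.quotKerEquivOfSurjective φ_surjective
  refine ⟨LinearMap.ker φ, e.symm.toLinearMap ∘ₗ g.codRestrict S fun x => ⟨.of x, rfl⟩,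
    S.subtype ∘ₗ e.toLinearMap,
    (WitnessTerm.isEquationallyAlmostFlat_evalRange g hw).of_leftInverse
      (f := e.toLinearMap) (g := e.symm.toLinearMap) e.symm_apply_apply, ?_⟩
  exact LinearMap.ext fun x => (congrArg S.subtype (e.apply_symm_apply ⟨g x, _⟩)).symm

theorem exists_isEquationallyAlmostFlat_solutionSet (m : Ideal R) (M : Type u) [AddCommGroup M]
    [Module R M] :
    ∃ (ι : Type u) (E : ι → ModuleCat.{u} R) (f : ∀ i, M →ₗ[R] E i),
      (∀ i, IsEquationallyAlmostFlat m (E i)) ∧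
        ∀ (F : Type u) [AddCommGroup F] [Module R F], IsEquationallyAlmostFlat m F →
          ∀ g : M →ₗ[R] F, ∃ (i : ι) (h : (E i : Type u) →ₗ[R] F), g = h ∘ₗ f i := by
  let ι := {p : (Q : Submodule R (WitnessTerm R M →₀ R)) × (M →ₗ[R] (WitnessTerm R M →₀ R) ⧸ Q) //
    IsEquationallyAlmostFlat m ((WitnessTerm R M →₀ R) ⧸ p.1)}
  refine ⟨ι, fun i => .of R ((WitnessTerm R M →₀ R) ⧸ i.1.1), fun i => i.1.2, fun i => i.2,
    fun F _ _ hF g => ?_⟩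
  obtain ⟨Q, f, h, hQ, hg⟩ := hF.exists_factorization_quotient g
  exact ⟨⟨⟨Q, f⟩, hQ⟩, h, hg⟩

theorem exists_isEquationallyAlmostFlat_preenvelope_of_pi
    (hpi : ∀ (ι : Type u) (E : ι → ModuleCat.{u} R), (∀ i, IsEquationallyAlmostFlat m (E i)) →
      IsEquationallyAlmostFlat m (∀ i, E i))
    (M : Type u) [AddCommGroup M] [Module R M] :
    ∃ (E : ModuleCat.{u} R) (f : M →ₗ[R] E), IsEquationallyAlmostFlat m E ∧
      ∀ (F : Type u) [AddCommGroup F] [Module R F], IsEquationallyAlmostFlat m F →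
        ∀ g : M →ₗ[R] F, ∃ h : (E : Type u) →ₗ[R] F, g = h ∘ₗ f := by
  obtain ⟨ι, E, f, hE, hf⟩ := exists_isEquationallyAlmostFlat_solutionSet m M
  refine ⟨.of R (∀ i, E i), LinearMap.pi f, hpi ι E hE, fun F _ _ hF g => ?_⟩
  obtain ⟨i, h, rfl⟩ := hf F hF g
  exact ⟨h ∘ₗ LinearMap.proj i, rfl⟩

end SolutionSet

/-- `R` is almost coherent iff every module has an almost flat
preenvelope. -/
theorem almostCoherent_iff_almostFlat_preenvelope
    {R : Type u} [CommRing R] (m : Ideal R) (hm : m * m = m) :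
    IsAlmostCoherent m ↔
      (∀ (M : Type u) [AddCommGroup M] [Module R M],
        ∃ (F : ModuleCat.{u} R) (f : M →ₗ[R] F), IsAlmostFlat m F ∧
          ∀ (F' : Type u) [AddCommGroup F'] [Module R F'], IsAlmostFlat m F' →
            ∀ g : M →ₗ[R] F', ∃ h : (F : Type u) →ₗ[R] F', g = h ∘ₗ f) := by
  constructor
  · intro hcoh M _ _
    have hcoker := hcoh.hasAlmostWeakCokernels hm
    obtain ⟨E, f, hE, hf⟩ := exists_isEquationallyAlmostFlat_preenvelope_of_pi
      (fun _ _ => hcoker.isEquationallyAlmostFlat_pi hm) M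
    exact ⟨E, f, hE.isAlmostFlat hm, fun F _ _ hF => hf F hF.isEquationallyAlmostFlat⟩
  · intro henv
    refine (HasAlmostWeakCokernels.of_isEquationallyAlmostFlat_pi fun X => ?_).isAlmostCoherent
    obtain ⟨F, f, hF, hf⟩ := henv (X → R)
    have hR : IsAlmostFlat m R := IsEquationallyAlmostFlat.of_flat.isAlmostFlat hm
    choose r hr using fun i : X => hf R hR (LinearMap.proj i)
    have leftInverse : Function.LeftInverse (LinearMap.pi r) f := fun c =>
      funext fun i => (LinearMap.congr_fun (hr i) c).symm
    exact hF.isEquationallyAlmostFlat.of_leftInverse leftInverse
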